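/- Let μ and ρ be probability measures on a measurable space with ρ absolutely continuous with respect to μ and χ²(ρ‖μ) := ∫ (dρ/dμ − 1)² dμ < ∞. For β ≥ 1, define the mixture ρ̂ := (1 − 1/β)·μ + (1/β)·ρ. Then ρ̂ is absolutely continuous with respect to μ, χ²(ρ̂‖μ) = β^{−2}·χ²(ρ‖μ), and KL(ρ̂‖μ) ≤ β^{−2}·χ²(ρ‖μ). -/

import Mathlib

open MeasureTheory Real

noncomputable section

/-- The chi-squared divergence `χ²(ρ‖μ) = ∫ (dρ/dμ − 1)² dμ` (as a real number). -/
def chiSqReal {X : Type*} [MeasurableSpace X] (ρ μ : Measure X) : ℝ :=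
  ∫ x, ((ρ.rnDeriv μ x).toReal - 1) ^ 2 ∂μ

/-- The Kullback–Leibler divergence `KL(ρ‖μ) = ∫ log(dρ/dμ) dρ` (as a real number). -/
def klReal {X : Type*} [MeasurableSpace X] (ρ μ : Measure X) : ℝ :=
  ∫ x, Real.log ((ρ.rnDeriv μ x).toReal) ∂ρ

/-- The mixture `ρ̂ = (1 − 1/β) μ + (1/β) ρ`. -/
def mixture {X : Type*} [MeasurableSpace X] (μ ρ : Measure X) (β : ℝ) : Measure X :=
  ENNReal.ofReal (1 - 1 / β) • μ + ENNReal.ofReal (1 / β) • ρ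

/-- for the mixture `ρ̂ = (1 − 1/β) μ + (1/β) ρ` with `β ≥ 1`, one has
`ρ̂ ≪ μ`, `χ²(ρ̂‖μ) = β⁻² χ²(ρ‖μ)` and `KL(ρ̂‖μ) ≤ β⁻² χ²(ρ‖μ)`. -/
theorem statement16 {X : Type*} [MeasurableSpace X] (μ ρ : Measure X)
    [IsProbabilityMeasure μ] [IsProbabilityMeasure ρ]
    (hac : ρ ≪ μ)
    (hfin : Integrable (fun x => ((ρ.rnDeriv μ x).toReal - 1) ^ 2) μ)
    (β : ℝ) (hβ : 1 ≤ β) :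
    mixture μ ρ β ≪ μ ∧
    chiSqReal (mixture μ ρ β) μ = β⁻¹ ^ 2 * chiSqReal ρ μ ∧
    klReal (mixture μ ρ β) μ ≤ β⁻¹ ^ 2 * chiSqReal ρ μ := by
  have hβ0 : 0 < β := by linarith
  have h1 : 0 ≤ 1 - 1 / β := by
    rw [sub_nonneg, div_le_one hβ0]; exact hβ
  have h2 : 0 ≤ 1 / β := by positivity
  have hprob : IsProbabilityMeasure (mixture μ ρ β) := by
    constructor
    simp only [mixture, Measure.add_apply, Measure.smul_apply, measure_univ, smul_eq_mul, mul_one]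
    rw [← ENNReal.ofReal_add h1 h2]
    simp
  have hacm : mixture μ ρ β ≪ μ := by
    intro s hs
    simp [mixture, hs, hac hs]
  have hrn : ∀ᵐ x ∂μ, ((mixture μ ρ β).rnDeriv μ x).toReal - 1
      = β⁻¹ * ((ρ.rnDeriv μ x).toReal - 1) := by
    have : IsFiniteMeasure (ENNReal.ofReal (1 - 1 / β) • μ) :=
      Measure.smul_finite _ ENNReal.ofReal_ne_top
    have : IsFiniteMeasure (ENNReal.ofReal (1 / β) • ρ) :=
      Measure.smul_finite _ ENNReal.ofReal_ne_top
    filter_upwards [Measure.rnDeriv_add (ENNReal.ofReal (1 - 1 / β) • μ)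
        (ENNReal.ofReal (1 / β) • ρ) μ,
      Measure.rnDeriv_smul_left_of_ne_top μ μ (r := ENNReal.ofReal (1 - 1 / β))
        ENNReal.ofReal_ne_top,
      Measure.rnDeriv_smul_left_of_ne_top ρ μ (r := ENNReal.ofReal (1 / β))
        ENNReal.ofReal_ne_top, Measure.rnDeriv_self μ, Measure.rnDeriv_lt_top ρ μ]
      with x e1 e2 e3 e4 e5
    have e : (mixture μ ρ β).rnDeriv μ x
        = ENNReal.ofReal (1 - 1 / β) + ENNReal.ofReal (1 / β) * ρ.rnDeriv μ x := by
      rw [mixture, e1, Pi.add_apply, e2, e3, Pi.smul_apply, Pi.smul_apply, e4]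
      simp
    rw [e, ENNReal.toReal_add ENNReal.ofReal_ne_top
      (ENNReal.mul_ne_top ENNReal.ofReal_ne_top e5.ne), ENNReal.toReal_mul,
      ENNReal.toReal_ofReal h1, ENNReal.toReal_ofReal h2]
    ring
  have hsq : (fun x => (((mixture μ ρ β).rnDeriv μ x).toReal - 1) ^ 2)
      =ᵐ[μ] fun x => β⁻¹ ^ 2 * ((ρ.rnDeriv μ x).toReal - 1) ^ 2 := by
    filter_upwards [hrn] with x hx
    rw [hx]; ring
  have hchi : chiSqReal (mixture μ ρ β) μ = β⁻¹ ^ 2 * chiSqReal ρ μ := by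
    unfold chiSqReal
    rw [integral_congr_ae hsq, integral_const_mul]
  refine ⟨hacm, hchi, ?_⟩
  rw [← hchi]
  have hk : klReal (mixture μ ρ β) μ
      = ∫ x, InformationTheory.klFun ((mixture μ ρ β).rnDeriv μ x).toReal ∂μ := by
    rw [← InformationTheory.toReal_klDiv_eq_integral_klFun hacm,
      InformationTheory.toReal_klDiv_of_measure_eq hacm (by simp)]
    rfl
  rw [hk, chiSqReal]
  refine integral_mono_of_nonneg
    (Filter.Eventually.of_forall fun x => InformationTheory.klFun_nonneg ENNReal.toReal_nonneg)
    ((hfin.const_mul _).congr hsq.symm) (Filter.Eventually.of_forall fun x => ?_)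
  have hy : 0 ≤ ((mixture μ ρ β).rnDeriv μ x).toReal := ENNReal.toReal_nonneg
  beta_reduce
  generalize ((mixture μ ρ β).rnDeriv μ x).toReal = y at hy ⊢
  show InformationTheory.klFun y ≤ (y - 1) ^ 2
  rw [InformationTheory.klFun]
  rcases hy.eq_or_lt with rfl | hy
  · simp
  · nlinarith [mul_le_mul_of_nonneg_left (Real.log_le_sub_one_of_pos hy) hy.le]
end
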